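/- arXiv:2508.04209 — 4 statements merged into one kernel-verified Lean document; each statement's English description precedes it below -/
import Mathlib

section
/- Let k ≥ 1, let Δ ≥ 0, and let G = (V,E) be a finite simple graph with |V| ≥ k whose maximum vertex degree is at most Δ. Then ∑_{i=1}^{k} λ_i(L(G)) ≤ |E| + k · min{Δ, k}. -/
open Finset

/-- The `i`-th largest entry (1-indexed, so `i = 1` gives the maximum) of a tuple
`f : Fin n → ℝ`, counted with multiplicity. Junk value `0` outside the range `1 ≤ i ≤ n`. -/
noncomputable def ithLargest {n : ℕ} (f : Fin n → ℝ) (i : ℕ) : ℝ :=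
  if h : 1 ≤ i ∧ i ≤ n then f (Tuple.sort f (Fin.rev ⟨i - 1, by omega⟩)) else 0

/-- The eigenvalues of the Laplacian matrix of a finite simple graph `G`
(as a tuple indexed by the vertices, with multiplicity). -/
noncomputable def lapEigs {n : ℕ} (G : SimpleGraph (Fin n)) [DecidableRel G.Adj] :
    Fin n → ℝ :=
  (SimpleGraph.posSemidef_lapMatrix ℝ G).isHermitian.eigenvalues

/-- The degree sequence of `G`, as a real-valued tuple indexed by the vertices. -/
noncomputable def degTuple {n : ℕ} (G : SimpleGraph (Fin n)) [DecidableRel G.Adj] :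
    Fin n → ℝ :=
  fun v => (G.degree v : ℝ)

/-!
Fix a set of `k` Laplacian eigenvalues and let `P` be the orthogonal projection onto the span of the
corresponding eigenvectors. Their sum is `tr (L P)`, which is the sum of `P u u + P v v - 2 * P u v`
over the edges `uv`, so the theorem bounds the total *excess* `P u u + P v v - 2 * P u v - 1` of the
edges. The entries of `P` are controlled by `∑ u, P u u = k` and `∑ v, P u v ^ 2 = P u u`.

* Since `|P u v| ≤ 1 / 2` for `u ≠ v`, the excess of an edge is at most `P u u + P v v`, so the
  total is at most `∑ u, deg u * P u u ≤ Δ * k`.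
* If `k ≥ 2`, the excess of *every* pair of vertices can be split into a charge to `u` and a charge
  to `v` in such a way that each `u` is charged at most `k * P u u` altogether. This gives `k ^ 2`.
* If `k = 1`, the Anderson–Morley bound on an eigenvalue by the maximum of `deg u + deg v` over the
  edges `uv` gives `|E| + 1`.
-/

section SpectralProjection

variable {V 𝕜 : Type*} [Fintype V] [DecidableEq V] [RCLike 𝕜] {A : Matrix V V 𝕜}

/-- The orthogonal projection onto the span of the eigenvectors of the Hermitian matrix `A` with
index in `J`; the indices are those of `Matrix.IsHermitian.eigenvalues`. -/
noncomputable def spectralProjection (hA : A.IsHermitian) (J : Finset V) : Matrix V V 𝕜 :=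
  Unitary.conjStarAlgAut 𝕜 _ hA.eigenvectorUnitary
    (Matrix.diagonal fun j => if j ∈ J then 1 else 0)

lemma trace_conjStarAlgAut (U : Matrix.unitaryGroup V 𝕜) (M : Matrix V V 𝕜) :
    (Unitary.conjStarAlgAut 𝕜 _ U M).trace = M.trace := by
  rw [Unitary.conjStarAlgAut_apply, Matrix.trace_mul_cycle, Unitary.coe_star_mul_self, one_mul]

lemma isStarProjection_spectralProjection (hA : A.IsHermitian) (J : Finset V) :
    IsStarProjection (spectralProjection hA J) := by
  refine IsStarProjection.map ⟨?_, ?_⟩ _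
  · simp [IsIdempotentElem, Matrix.diagonal_mul_diagonal]
  · simp [IsSelfAdjoint, Matrix.star_eq_conjTranspose, Matrix.diagonal_conjTranspose, Pi.star_def,
      apply_ite]

lemma trace_spectralProjection (hA : A.IsHermitian) (J : Finset V) :
    (spectralProjection hA J).trace = #J := by
  rw [spectralProjection, trace_conjStarAlgAut]
  simp [Matrix.trace_diagonal]

lemma trace_mul_spectralProjection (hA : A.IsHermitian) (J : Finset V) :
    (A * spectralProjection hA J).trace = ∑ j ∈ J, (hA.eigenvalues j : 𝕜) := by
  nth_rw 1 [hA.spectral_theorem]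
  rw [spectralProjection, ← map_mul, trace_conjStarAlgAut, Matrix.diagonal_mul_diagonal]
  simp [Matrix.trace_diagonal]

end SpectralProjection

section StarProjection

variable {V : Type*} [Fintype V] {P : Matrix V V ℝ}

lemma apply_comm_of_isStarProjection (hP : IsStarProjection P) (u v : V) : P u v = P v u := by
  simpa using (Matrix.IsHermitian.apply hP.isSelfAdjoint u v).symm

lemma sum_sq_eq_of_isStarProjection (hP : IsStarProjection P) (u : V) :
    ∑ v, P u v ^ 2 = P u u := by
  calc ∑ v, P u v ^ 2 = ∑ v, P u v * P v u := by
        simp only [sq, apply_comm_of_isStarProjection hP _ u]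
    _ = (P * P) u u := Matrix.mul_apply.symm
    _ = P u u := by rw [hP.isIdempotentElem.eq]

lemma diag_nonneg_of_isStarProjection (hP : IsStarProjection P) (u : V) : 0 ≤ P u u := by
  rw [← sum_sq_eq_of_isStarProjection hP u]
  positivity

lemma sum_erase_sq_eq_of_isStarProjection [DecidableEq V] (hP : IsStarProjection P) (u : V) :
    ∑ v ∈ univ.erase u, P u v ^ 2 = P u u * (1 - P u u) := by
  have := sum_erase_add univ (fun v => P u v ^ 2) (mem_univ u)
  rw [sum_sq_eq_of_isStarProjection hP u] at this
  linarith

lemma diag_le_one_of_isStarProjection (hP : IsStarProjection P) (u : V) : P u u ≤ 1 := by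
  classical
  have : 0 ≤ P u u * (1 - P u u) := by
    rw [← sum_erase_sq_eq_of_isStarProjection hP u]
    positivity
  nlinarith

lemma sq_le_of_isStarProjection (hP : IsStarProjection P) {u v : V} (huv : u ≠ v) :
    P u v ^ 2 ≤ P u u * (1 - P u u) := by
  classical
  rw [← sum_erase_sq_eq_of_isStarProjection hP u]
  exact single_le_sum (f := fun w => P u w ^ 2) (fun _ _ => sq_nonneg _) (by simp [huv.symm])

lemma neg_half_le_of_isStarProjection (hP : IsStarProjection P) {u v : V} (huv : u ≠ v) :
    -(1 / 2) ≤ P u v := by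
  nlinarith [sq_le_of_isStarProjection hP huv, sq_nonneg (P u u - 1 / 2)]

lemma eq_zero_of_isStarProjection_of_diag_eq_one (hP : IsStarProjection P) {u v : V} (huv : u ≠ v)
    (hu : P u u = 1) : P u v = 0 := by
  have := sq_le_of_isStarProjection hP huv
  rw [hu, sub_self, mul_zero] at this
  exact pow_eq_zero_iff two_ne_zero |>.1 (this.antisymm (sq_nonneg _))

end StarProjection

section Charging

variable {V : Type*}

/-- The amount by which the contribution of the edge `uv` to `tr (L P)` exceeds its contribution `1`
to the number of edges. -/
def edgeExcess (P : Matrix V V ℝ) (u v : V) : ℝ :=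
  P u u + P v v - 2 * P u v - 1

/-- The share of `edgeExcess P u v` that is charged to `u`. For a projection `P`, the last term sums
to at most `P u u` over `v ≠ u`, and its division by zero at `P u u = 1` is harmless because then
`P u v = 0`. -/
noncomputable def vertexCharge (P : Matrix V V ℝ) (u v : V) : ℝ :=
  (P u u / 2 + P u u ^ 2 / 4) * P v v + P u v ^ 2 / (1 - P u u)

lemma mul_mul_sub_one_div_le {a b : ℝ} (ha₀ : 0 ≤ a) (hb₀ : 0 ≤ b) (ha : a < 1) (hb : b < 1) :
    (1 - a) * (1 - b) * (a + b - 1) / (2 - a - b) ≤ a * b * (a + b) / 4 := by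
  have hq : 0 < 2 - a - b := by linarith
  have hm : 0 ≤ (1 - a) * (1 - b) := mul_nonneg (by linarith) (by linarith)
  rcases le_total (a + b) 1 with hab | hab
  · calc (1 - a) * (1 - b) * (a + b - 1) / (2 - a - b) ≤ 0 :=
          div_nonpos_of_nonpos_of_nonneg (mul_nonpos_of_nonneg_of_nonpos hm (by linarith)) hq.le
      _ ≤ a * b * (a + b) / 4 := by positivity
  · have : 0 ≤ a + b - 1 := by linarith
    have hamgm : (1 - a) * (1 - b) ≤ (2 - a - b) ^ 2 / 4 := by nlinarith [sq_nonneg (a - b)]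
    calc (1 - a) * (1 - b) * (a + b - 1) / (2 - a - b)
        ≤ (2 - a - b) ^ 2 / 4 * (a + b - 1) / (2 - a - b) := by gcongr
      _ = (a + b - 1) * (2 - a - b) / 4 := by field_simp
      _ ≤ a * b * (a + b) / 4 := by
        gcongr
        · linarith
        · linarith

lemma neg_two_mul_le {x y : ℝ} (hx : 0 < x) (hy : 0 < y) (t : ℝ) :
    -2 * t ≤ x * y / (x + y) + t ^ 2 / x + t ^ 2 / y := by
  have h : x * y / (x + y) + t ^ 2 / x + t ^ 2 / y + 2 * t =
      (t * (x + y) + x * y) ^ 2 / ((x + y) * x * y) := by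
    field_simp
    ring
  have : 0 ≤ (t * (x + y) + x * y) ^ 2 / ((x + y) * x * y) := by positivity
  linarith

lemma add_sub_two_mul_sub_one_le {a b : ℝ} (ha₀ : 0 ≤ a) (hb₀ : 0 ≤ b) (ha : a < 1) (hb : b < 1)
    (t : ℝ) :
    a + b - 2 * t - 1 ≤ a * b + a * b * (a + b) / 4 + t ^ 2 / (1 - a) + t ^ 2 / (1 - b) := by
  have hsq := neg_two_mul_le (sub_pos.2 ha) (sub_pos.2 hb) t
  have hcorr := mul_mul_sub_one_div_le ha₀ hb₀ ha hb
  have hsplit : a + b - 1 + (1 - a) * (1 - b) / (1 - a + (1 - b)) =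
      a * b + (1 - a) * (1 - b) * (a + b - 1) / (2 - a - b) := by
    have : 1 - a + (1 - b) ≠ 0 := by linarith
    have : 2 - a - b ≠ 0 := by linarith
    field_simp
    ring
  linarith

variable [Fintype V] {P : Matrix V V ℝ}

lemma vertexCharge_nonneg (hP : IsStarProjection P) (u v : V) : 0 ≤ vertexCharge P u v := by
  have hu := diag_nonneg_of_isStarProjection hP u
  have hv := diag_nonneg_of_isStarProjection hP v
  have hu' := sub_nonneg.2 (diag_le_one_of_isStarProjection hP u)
  unfold vertexCharge
  positivity

lemma edgeExcess_le_vertexCharge_add (hP : IsStarProjection P) {u v : V} (huv : u ≠ v) :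
    edgeExcess P u v ≤ vertexCharge P u v + vertexCharge P v u := by
  have hu₀ := diag_nonneg_of_isStarProjection hP u
  have hv₀ := diag_nonneg_of_isStarProjection hP v
  have hu₁ := diag_le_one_of_isStarProjection hP u
  have hv₁ := diag_le_one_of_isStarProjection hP v
  have hcomm := apply_comm_of_isStarProjection hP v u
  rcases hu₁.eq_or_lt with hu | hu
  · have := eq_zero_of_isStarProjection_of_diag_eq_one hP huv hu
    simp only [edgeExcess, vertexCharge, hcomm, this, hu, zero_pow two_ne_zero, zero_div]
    nlinarith
  rcases hv₁.eq_or_lt with hv | hv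
  · have := eq_zero_of_isStarProjection_of_diag_eq_one hP huv.symm hv
    simp only [edgeExcess, vertexCharge, ← hcomm, this, hv, zero_pow two_ne_zero, zero_div]
    nlinarith
  have := add_sub_two_mul_sub_one_le hu₀ hv₀ hu hv (P u v)
  simp only [edgeExcess, vertexCharge, hcomm]
  linarith

lemma sum_erase_vertexCharge_le [DecidableEq V] (hP : IsStarProjection P) (htr : 2 ≤ P.trace)
    (u : V) :
    ∑ v ∈ univ.erase u, vertexCharge P u v ≤ P.trace * P u u := by
  have hu₀ := diag_nonneg_of_isStarProjection hP u
  have hu₁ := diag_le_one_of_isStarProjection hP u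
  have hdiag : ∑ v ∈ univ.erase u, P v v = P.trace - P u u := by
    rw [eq_sub_iff_add_eq]
    exact sum_erase_add univ (fun v => P v v) (mem_univ u)
  have hoff : P u u * (1 - P u u) / (1 - P u u) ≤ P u u := by
    rw [mul_div_assoc]
    exact mul_le_of_le_one_right hu₀ (div_self_le_one _)
  have hslack : 0 ≤ P u u * ((P.trace - 2) * (2 - P u u) + P u u ^ 2) :=
    mul_nonneg hu₀ (add_nonneg (mul_nonneg (by linarith) (by linarith)) (sq_nonneg _))
  calc ∑ v ∈ univ.erase u, vertexCharge P u v
      = (P u u / 2 + P u u ^ 2 / 4) * (P.trace - P u u) +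
          P u u * (1 - P u u) / (1 - P u u) := by
        simp only [vertexCharge, sum_add_distrib, ← mul_sum, ← sum_div, hdiag,
          sum_erase_sq_eq_of_isStarProjection hP]
    _ ≤ (P u u / 2 + P u u ^ 2 / 4) * (P.trace - P u u) + P u u := by gcongr
    _ ≤ P.trace * P u u := by linarith

end Charging

section Laplacian

variable {V : Type*} [Fintype V] (G : SimpleGraph V) [DecidableRel G.Adj]

lemma sum_neighborFinset_comm {M : Type*} [AddCommMonoid M] (f : V → V → M) :
    ∑ u, ∑ v ∈ G.neighborFinset u, f u v = ∑ u, ∑ v ∈ G.neighborFinset u, f v u :=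
  sum_comm' (by simp [G.adj_comm])

lemma lapMatrix_mulVec_apply_eq_sum_sub [DecidableEq V] {R : Type*} [NonAssocRing R] (x : V → R)
    (u : V) : (G.lapMatrix R).mulVec x u = ∑ v ∈ G.neighborFinset u, (x u - x v) := by
  rw [G.lapMatrix_mulVec_apply, sum_sub_distrib, sum_const, G.card_neighborFinset_eq_degree,
    nsmul_eq_mul]

lemma trace_lapMatrix_mul [DecidableEq V] {R : Type*} [NonAssocRing R] (M : Matrix V V R) :
    (G.lapMatrix R * M).trace = ∑ u, ∑ v ∈ G.neighborFinset u, (M u u - M v u) :=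
  sum_congr rfl fun u _ => lapMatrix_mulVec_apply_eq_sum_sub G (M.col u) u

lemma sum_edgeExcess [DecidableEq V] (P : Matrix V V ℝ) :
    ∑ u, ∑ v ∈ G.neighborFinset u, edgeExcess P u v =
      2 * ((G.lapMatrix ℝ * P).trace - #G.edgeFinset) := by
  have hE : ∑ u, ∑ _v ∈ G.neighborFinset u, (1 : ℝ) = 2 * #G.edgeFinset := by
    simpa using mod_cast G.sum_degrees_eq_twice_card_edges
  have hdiag := sum_neighborFinset_comm G fun _ v => P v v
  have hoff := sum_neighborFinset_comm G fun u v => P u v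
  simp only [edgeExcess, trace_lapMatrix_mul, sum_sub_distrib, sum_add_distrib, ← mul_sum, hE]
  linarith

variable {G} [DecidableEq V]

lemma trace_lapMatrix_mul_le_of_degree_le {P : Matrix V V ℝ} (hP : IsStarProjection P) {Δ : ℕ}
    (hΔ : ∀ v, G.degree v ≤ Δ) :
    (G.lapMatrix ℝ * P).trace ≤ #G.edgeFinset + P.trace * Δ := by
  have hdeg : ∑ u, ∑ _v ∈ G.neighborFinset u, P u u ≤ P.trace * Δ := by
    simp only [sum_const, G.card_neighborFinset_eq_degree, nsmul_eq_mul]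
    rw [Matrix.trace, sum_mul]
    refine sum_le_sum fun u _ => ?_
    rw [mul_comm]
    exact mul_le_mul_of_nonneg_left (mod_cast hΔ u) (diag_nonneg_of_isStarProjection hP u)
  have hexcess : 2 * ((G.lapMatrix ℝ * P).trace - #G.edgeFinset) ≤ 2 * (P.trace * Δ) :=
    calc 2 * ((G.lapMatrix ℝ * P).trace - #G.edgeFinset)
        = ∑ u, ∑ v ∈ G.neighborFinset u, edgeExcess P u v := (sum_edgeExcess G P).symm
      _ ≤ ∑ u, ∑ v ∈ G.neighborFinset u, (P u u + P v v) := by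
        refine sum_le_sum fun u _ => sum_le_sum fun v hv => ?_
        have := neg_half_le_of_isStarProjection hP (G.ne_of_adj ((G.mem_neighborFinset u v).1 hv))
        unfold edgeExcess
        linarith
      _ = 2 * ∑ u, ∑ _v ∈ G.neighborFinset u, P u u := by
        simp only [sum_add_distrib, sum_neighborFinset_comm G fun _ v => P v v, two_mul]
      _ ≤ 2 * (P.trace * Δ) := by gcongr
  linarith

variable (G) in
lemma trace_lapMatrix_mul_le_sq {P : Matrix V V ℝ} (hP : IsStarProjection P)
    (htr : 2 ≤ P.trace) :
    (G.lapMatrix ℝ * P).trace ≤ #G.edgeFinset + P.trace ^ 2 := by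
  have hexcess : 2 * ((G.lapMatrix ℝ * P).trace - #G.edgeFinset) ≤ 2 * P.trace ^ 2 :=
    calc 2 * ((G.lapMatrix ℝ * P).trace - #G.edgeFinset)
        = ∑ u, ∑ v ∈ G.neighborFinset u, edgeExcess P u v := (sum_edgeExcess G P).symm
      _ ≤ ∑ u, ∑ v ∈ G.neighborFinset u, (vertexCharge P u v + vertexCharge P v u) :=
        sum_le_sum fun u _ => sum_le_sum fun v hv =>
          edgeExcess_le_vertexCharge_add hP (G.ne_of_adj ((G.mem_neighborFinset u v).1 hv))
      _ = 2 * ∑ u, ∑ v ∈ G.neighborFinset u, vertexCharge P u v := by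
        simp only [sum_add_distrib, sum_neighborFinset_comm G fun u v => vertexCharge P v u,
          two_mul]
      _ ≤ 2 * ∑ u, ∑ v ∈ univ.erase u, vertexCharge P u v := by
        gcongr with u
        · exact fun _ _ _ => vertexCharge_nonneg hP _ _
        · exact fun v hv => by simpa using (G.ne_of_adj ((G.mem_neighborFinset u v).1 hv)).symm
      _ ≤ 2 * ∑ u, P.trace * P u u := by
        gcongr with u
        exact sum_erase_vertexCharge_le hP htr u
      _ = 2 * P.trace ^ 2 := by
        rw [← mul_sum, sq]
        rfl
  linarith

end Laplacian

section AndersonMorley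

variable {V : Type*} [Fintype V] {G : SimpleGraph V} [DecidableRel G.Adj]

lemma degree_add_degree_le_of_adj {u v : V} (h : G.Adj u v) :
    G.degree u + G.degree v ≤ #G.edgeFinset + 1 := by
  classical
  have hinter : G.incidenceFinset u ∩ G.incidenceFinset v = {s(u, v)} := by
    rw [← coe_inj]
    simpa using G.incidenceSet_inter_incidenceSet_of_adj h
  have hunion : #(G.incidenceFinset u ∪ G.incidenceFinset v) ≤ #G.edgeFinset :=
    card_le_card (union_subset (G.incidenceFinset_subset u) (G.incidenceFinset_subset v))
  have := card_union_add_card_inter (G.incidenceFinset u) (G.incidenceFinset v)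
  rw [hinter, card_singleton, G.card_incidenceFinset_eq_degree,
    G.card_incidenceFinset_eq_degree] at this
  omega

variable [DecidableEq V]

lemma lapMatrix_mulVec_apply_le {x : V → ℝ} {u : V} {m : ℝ}
    (hm : ∀ w, G.Adj u w → x u - x w ≤ m) :
    (G.lapMatrix ℝ).mulVec x u ≤ G.degree u * m := by
  rw [lapMatrix_mulVec_apply_eq_sum_sub, ← G.card_neighborFinset_eq_degree, ← nsmul_eq_mul]
  exact sum_le_card_nsmul _ _ _ fun w hw => hm w ((G.mem_neighborFinset u w).1 hw)

lemma le_of_mem_spectrum_lapMatrix_of_degree_add_degree_le {μ : ℝ}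
    (hμ : μ ∈ spectrum ℝ (G.lapMatrix ℝ)) {D : ℕ}
    (hD : ∀ u v, G.Adj u v → G.degree u + G.degree v ≤ D) :
    μ ≤ D := by
  rw [← Matrix.spectrum_toLin', ← Module.End.hasEigenvalue_iff_mem_spectrum] at hμ
  obtain ⟨x, hx⟩ := hμ.exists_hasEigenvector
  have heig (u : V) : (G.lapMatrix ℝ).mulVec x u = μ * x u := congrFun hx.apply_eq_smul u
  by_cases hG : ∃ u v, G.Adj u v ∧ x v < x u
  · obtain ⟨a, b, hab, hlt⟩ := hG
    obtain ⟨⟨u, v⟩, huv, hmax⟩ := exists_max_image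
      (univ.filter fun e : V × V => G.Adj e.1 e.2) (fun e => x e.1 - x e.2)
      ⟨(a, b), by simpa using hab⟩
    simp only [mem_filter, mem_univ, true_and, Prod.forall] at huv hmax
    have hpos : 0 < x u - x v := (sub_pos.2 hlt).trans_le (hmax a b hab)
    have hu : μ * x u ≤ G.degree u * (x u - x v) :=
      heig u ▸ lapMatrix_mulVec_apply_le fun w hw => hmax u w hw
    have hv : -(μ * x v) ≤ G.degree v * (x u - x v) := by
      rw [← heig v, ← Pi.neg_apply, ← Matrix.mulVec_neg]
      refine lapMatrix_mulVec_apply_le fun w hw => ?_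
      simpa [neg_add_eq_sub] using hmax w v hw.symm
    refine le_of_mul_le_mul_right ?_ hpos
    calc μ * (x u - x v) ≤ (G.degree u + G.degree v) * (x u - x v) := by linarith
      _ ≤ D * (x u - x v) := by
        gcongr
        exact_mod_cast hD u v huv
  · push Not at hG
    have hker : (G.lapMatrix ℝ).mulVec x = 0 :=
      G.lapMatrix_mulVec_eq_zero_iff_forall_adj.2 fun u v huv =>
        (hG u v huv).antisymm (hG v u huv.symm)
    obtain ⟨u, hu⟩ := Function.ne_iff.1 hx.2
    have hμu : μ * x u = 0 := by rw [← heig u, hker, Pi.zero_apply]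
    rw [(mul_eq_zero.1 hμu).resolve_right hu]
    positivity

end AndersonMorley

lemma exists_card_eq_sum_ithLargest_eq {n k : ℕ} (f : Fin n → ℝ) (hk : k ≤ n) :
    ∃ J : Finset (Fin n), #J = k ∧ ∑ i ∈ Icc 1 k, ithLargest f i = ∑ j ∈ J, f j := by
  let e : Fin k ↪ Fin n :=
    (Fin.castLEEmb hk).trans (Fin.revPerm.trans (Tuple.sort f)).toEmbedding
  refine ⟨univ.map e, by simp, ?_⟩
  rw [sum_map, ← Ico_add_one_right_eq_Icc, sum_Ico_eq_sum_range, add_tsub_cancel_right, sum_range]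
  refine sum_congr rfl fun i _ => ?_
  rw [ithLargest, dif_pos ⟨by omega, by omega⟩]
  simp [e, Fin.castLE]

lemma sum_lapMatrix_eigenvalues_le_sq {V : Type*} [Fintype V] [DecidableEq V] (G : SimpleGraph V)
    [DecidableRel G.Adj] (hL : (G.lapMatrix ℝ).IsHermitian) (J : Finset V) :
    ∑ j ∈ J, hL.eigenvalues j ≤ #G.edgeFinset + (#J : ℝ) ^ 2 := by
  rcases Nat.lt_or_ge #J 2 with hJ | hJ
  · interval_cases h : #J
    · simp [card_eq_zero.1 h]
    · obtain ⟨j, rfl⟩ := card_eq_one.1 h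
      simpa using le_of_mem_spectrum_lapMatrix_of_degree_add_degree_le
        (hL.eigenvalues_mem_spectrum_real j) fun _ _ => degree_add_degree_le_of_adj
  · have htr : (spectralProjection hL J).trace = #J := trace_spectralProjection hL J
    have := trace_lapMatrix_mul_le_sq G (isStarProjection_spectralProjection hL J)
      (by rw [htr]; exact_mod_cast hJ)
    rwa [htr, trace_mul_spectralProjection] at this

theorem sum_lapEigs_le_of_maxDegree_general {V : Type*} [Fintype V] [DecidableEq V]
    (G : SimpleGraph V) [DecidableRel G.Adj] (hL : (G.lapMatrix ℝ).IsHermitian) (J : Finset V)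
    {Δ : ℕ} (hΔ : ∀ v, G.degree v ≤ Δ) :
    ∑ j ∈ J, hL.eigenvalues j ≤ #G.edgeFinset + (#J : ℝ) * min (Δ : ℝ) #J := by
  have hdeg : ∑ j ∈ J, hL.eigenvalues j ≤ #G.edgeFinset + (#J : ℝ) * Δ := by
    have := trace_lapMatrix_mul_le_of_degree_le (isStarProjection_spectralProjection hL J) hΔ
    rwa [trace_spectralProjection, trace_mul_spectralProjection] at this
  have hsq := sum_lapMatrix_eigenvalues_le_sq G hL J
  rw [sq] at hsq
  rcases min_choice (Δ : ℝ) #J with h | h <;> rwa [h]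

/-- for `k ≥ 1`, `Δ ≥ 0`, and a graph `G` with at least `k` vertices and
maximum degree at most `Δ`, `∑_{i=1}^k λ_i(L(G)) ≤ |E| + k·min{Δ,k}`. -/
theorem sum_lapEigs_le_of_maxDegree {n : ℕ} (G : SimpleGraph (Fin n)) [DecidableRel G.Adj]
    (Δ : ℕ) (hΔ : ∀ v : Fin n, G.degree v ≤ Δ) (k : ℕ) (hk1 : 1 ≤ k) (hk2 : k ≤ n) :
    ∑ i ∈ Finset.Icc 1 k, ithLargest (lapEigs G) i ≤
      (G.edgeFinset.card : ℝ) + (k : ℝ) * min (Δ : ℝ) (k : ℝ) := by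
  obtain ⟨J, rfl, hJ⟩ := exists_card_eq_sum_ithLargest_eq (lapEigs G) hk2
  exact hJ ▸ sum_lapEigs_le_of_maxDegree_general G _ J hΔ
end

section
/- Let k ≥ 1, let t ≥ 2, and let G = (V,E) be a finite simple graph with |V| ≥ k that contains no cycle of length greater than t. Then ∑_{i=1}^{k} λ_i(L(G)) ≤ |E| + ⌊t(2k − 1)/2⌋. -/
open Finset

/-!
Any `k` Laplacian eigenvalues `λᵢ` with unit eigenvectors `yᵢ` put mass `∑ᵢ λᵢ yᵢ(v)²` on the vertex
`v`. This mass is at most `deg v`, a diagonal entry of `L`, and since `L D⁻¹ L ≤ 2 L` the ratios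
mass / degree add up to at most `2k`. So the sum of the eigenvalues is at most the degree sum of
some set `U` of at most `2k` vertices, which is at most `|E| + e(U)`, and the Erdős–Gallai theorem
gives `e(U) ≤ t (2k - 1) / 2`.

For Erdős–Gallai, take a longest path whose first vertex has the largest degree `d` among
the first vertices of all longest paths. Each of the `d` vertices preceding on it a neighbour of the
first vertex starts a Pósa rotation of the path. It therefore has degree at most `d`, and
its neighbours lie among the first `t` vertices of the path, as a longer chord would close
a cycle longer than `t`. These `d` vertices thus meet at most `d t / 2` edges and can be deleted.
-/

section LongCycles

open SimpleGraph

variable {V : Type*} {G : SimpleGraph V} {a b : V} {t : ℕ}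

/-- The circumference of `G` is at most `t`: no cycle is longer than `t`. An acyclic graph satisfies
this for every `t`. -/
def CircumferenceLE (G : SimpleGraph V) (t : ℕ) : Prop :=
  ∀ (v : V) (c : G.Walk v v), c.IsCycle → c.length ≤ t

theorem CircumferenceLE.induce (hG : CircumferenceLE G t) (s : Set V) :
    CircumferenceLE (G.induce s) t := fun _ c hc =>
  (Walk.length_map (Embedding.induce s).toHom c).symm.trans_le
    (hG _ _ (hc.map Subtype.val_injective))

theorem CircumferenceLE.length_lt_of_isPath_of_adj (hG : CircumferenceLE G t) (ht : 2 ≤ t)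
    {p : G.Walk a b} (hp : p.IsPath) (hab : G.Adj a b) : p.length < t := by
  by_contra! hlt
  have hcycle : (Walk.cons hab.symm p).IsCycle := by
    refine (Walk.cons_isCycle_iff p hab.symm).2 ⟨hp, fun hmem => ?_⟩
    have := hp.length_eq_one_of_mem_edges (Sym2.eq_swap ▸ hmem)
    omega
  have := hG _ _ hcycle
  rw [Walk.length_cons] at this
  omega

theorem CircumferenceLE.lt_of_adj_getVert (hG : CircumferenceLE G t) (ht : 2 ≤ t)
    {p : G.Walk a b} (hp : p.IsPath) {j : ℕ} (hj : j ≤ p.length) (h : G.Adj a (p.getVert j)) :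
    j < t := by
  have := hG.length_lt_of_isPath_of_adj ht (hp.take j) h
  rwa [Walk.take_length, min_eq_left hj] at this

/-- `p` has maximal length among all paths of `G`, whatever their endpoints. -/
structure IsLongestPath (p : G.Walk a b) : Prop where
  isPath : p.IsPath
  length_le : ∀ {c d : V} (q : G.Walk c d), q.IsPath → q.length ≤ p.length

theorem IsLongestPath.mem_support_of_adj {p : G.Walk a b} (hp : IsLongestPath p) {w : V}
    (haw : G.Adj a w) : w ∈ p.support := by
  by_contra hw
  have := hp.length_le (Walk.cons haw.symm p) (hp.isPath.cons hw)
  rw [Walk.length_cons] at this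
  omega

theorem IsLongestPath.exists_getVert_eq_of_adj {p : G.Walk a b} (hp : IsLongestPath p) {w : V}
    (haw : G.Adj a w) : ∃ j ≤ p.length, p.getVert j = w := by
  obtain ⟨j, hjw, hj⟩ := Walk.mem_support_iff_exists_getVert.1 (hp.mem_support_of_adj haw)
  exact ⟨j, hj, hjw⟩

/-- The Pósa rotation of `v₀ v₁ … vₗ` along the edge `v₀ vᵢ₊₁`, namely
`vᵢ vᵢ₋₁ … v₀ vᵢ₊₁ vᵢ₊₂ … vₗ`. It turns a path into one of the same length with first
vertex `vᵢ`. -/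
def posaRotation (p : G.Walk a b) (i : ℕ) (h : G.Adj a (p.getVert (i + 1))) :
    G.Walk (p.getVert i) b :=
  (p.take i).reverse.append (.cons h (p.drop (i + 1)))

section posaRotation

variable {p : G.Walk a b} {i : ℕ}

theorem length_posaRotation (hi : i < p.length) (h : G.Adj a (p.getVert (i + 1))) :
    (posaRotation p i h).length = p.length := by
  simp only [posaRotation, Walk.length_append, Walk.length_reverse, Walk.take_length,
    Walk.length_cons, Walk.drop_length]
  omega

theorem getVert_posaRotation (hi : i < p.length) (h : G.Adj a (p.getVert (i + 1))) (j : ℕ) :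
    (posaRotation p i h).getVert j = if j ≤ i then p.getVert (i - j) else p.getVert j := by
  simp only [posaRotation, Walk.getVert_append', Walk.length_reverse, Walk.take_length,
    Walk.getVert_reverse, Walk.take_getVert, min_eq_left hi.le]
  split_ifs with hji
  · rw [min_eq_right (Nat.sub_le i j)]
  · obtain ⟨m, rfl⟩ := Nat.exists_eq_add_of_lt (not_le.1 hji)
    rw [show i + m + 1 - i = m + 1 by omega, Walk.getVert_cons_succ, Walk.drop_getVert]
    congr 1
    omega

theorem isPath_posaRotation (hp : p.IsPath) (hi : i < p.length)
    (h : G.Adj a (p.getVert (i + 1))) : (posaRotation p i h).IsPath := by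
  rw [← Walk.IsPath.getVert_injOn_iff]
  intro j hj k hk hjk
  simp only [Set.mem_ofPred_eq, length_posaRotation hi h] at hj hk
  simp only [getVert_posaRotation hi h, ← apply_ite p.getVert] at hjk
  have := hp.getVert_injOn (by simp only [Set.mem_ofPred_eq]; split_ifs <;> omega)
    (by simp only [Set.mem_ofPred_eq]; split_ifs <;> omega) hjk
  split_ifs at this <;> omega

theorem IsLongestPath.posaRotation (hp : IsLongestPath p) (hi : i < p.length)
    (h : G.Adj a (p.getVert (i + 1))) : IsLongestPath (posaRotation p i h) where
  isPath := isPath_posaRotation hp.isPath hi h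
  length_le q hq := (hp.length_le q hq).trans_eq (length_posaRotation hi h).symm

end posaRotation

theorem exists_isLongestPath_forall_degree_le [Fintype V] [Nonempty V] (G : SimpleGraph V)
    [DecidableRel G.Adj] : ∃ (a b : V) (p : G.Walk a b), IsLongestPath p ∧
      ∀ {c d : V} (q : G.Walk c d), IsLongestPath q → G.degree c ≤ G.degree a := by
  classical
  have : Nonempty (Σ a b : V, G.Path a b) := ‹Nonempty V›.map fun v => ⟨v, v, .nil⟩
  obtain ⟨⟨a, b, p, hp⟩, hmax⟩ := Finite.exists_max
    fun q : Σ a b : V, G.Path a b => toLex (q.2.2.1.length, G.degree q.1)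
  have hlex {c d : V} (q : G.Walk c d) (hq : q.IsPath) : q.length < p.length ∨
      q.length = p.length ∧ G.degree c ≤ G.degree a :=
    Prod.Lex.toLex_le_toLex.1 (hmax ⟨c, d, q, hq⟩)
  refine ⟨a, b, p, ⟨hp, fun q hq => ?_⟩, fun q hq => ?_⟩
  · exact (hlex q hq).elim le_of_lt fun h => h.1.le
  · exact ((hlex q hq.isPath).resolve_left (hq.length_le p hp).not_gt).2

section headNeighborPreds

variable [DecidableEq V] [DecidableRel G.Adj] {p : G.Walk a b}

/-- The vertices immediately preceding, along a walk `p`, a neighbour of the first vertex.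
They are the possible first vertices of Pósa rotations of `p`. -/
def headNeighborPreds (p : G.Walk a b) : Finset V :=
  {i ∈ range p.length | G.Adj a (p.getVert (i + 1))}.image p.getVert

theorem mem_headNeighborPreds {v : V} : v ∈ headNeighborPreds p ↔
    ∃ i < p.length, G.Adj a (p.getVert (i + 1)) ∧ p.getVert i = v := by
  simp [headNeighborPreds, and_assoc]

theorem IsLongestPath.card_headNeighborPreds [Fintype V] (hp : IsLongestPath p) :
    #(headNeighborPreds p) = G.degree a := by
  have hinj := hp.isPath.getVert_injOn
  have himage : G.neighborFinset a =
      {i ∈ range p.length | G.Adj a (p.getVert (i + 1))}.image fun i => p.getVert (i + 1) := by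
    ext w
    simp only [mem_neighborFinset, mem_image, mem_filter, mem_range]
    refine ⟨fun haw => ?_, by rintro ⟨i, ⟨-, h⟩, rfl⟩; exact h⟩
    obtain ⟨j, hj, rfl⟩ := hp.exists_getVert_eq_of_adj haw
    obtain ⟨i, rfl⟩ : ∃ i, j = i + 1 := Nat.exists_eq_succ_of_ne_zero (by rintro rfl; simp at haw)
    exact ⟨i, ⟨by omega, haw⟩, rfl⟩
  rw [← card_neighborFinset_eq_degree, himage, headNeighborPreds, card_image_of_injOn,
    card_image_of_injOn]
  · intro i hi j hj hij
    simp only [coe_filter, mem_range, Set.mem_ofPred_eq] at hi hj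
    exact Nat.succ_injective (hinj hi.1 hj.1 hij)
  · refine hinj.mono fun i hi => ?_
    simp only [coe_filter, mem_range, Set.mem_ofPred_eq] at hi
    exact hi.1.le

theorem end_notMem_headNeighborPreds (hp : p.IsPath) : b ∉ headNeighborPreds p := by
  rw [mem_headNeighborPreds]
  rintro ⟨i, hi, -, hib⟩
  exact hi.ne ((hp.getVert_eq_end_iff hi.le).1 hib)

theorem headNeighborPreds_subset_image_range (hp : p.IsPath) (hG : CircumferenceLE G t)
    (ht : 2 ≤ t) : headNeighborPreds p ⊆ (range t).image p.getVert := by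
  intro v hv
  obtain ⟨i, hi, hadj, rfl⟩ := mem_headNeighborPreds.1 hv
  have hit : i + 1 < t := hG.lt_of_adj_getVert ht hp hi hadj
  exact mem_image_of_mem _ (mem_range.2 (by omega))

theorem IsLongestPath.neighborFinset_subset_of_mem_headNeighborPreds [Fintype V]
    (hp : IsLongestPath p) (hG : CircumferenceLE G t) (ht : 2 ≤ t) {v : V}
    (hv : v ∈ headNeighborPreds p) :
    G.neighborFinset v ⊆ (range t).image p.getVert := by
  obtain ⟨i, hi, hadj, rfl⟩ := mem_headNeighborPreds.1 hv
  have hit : i + 1 < t := hG.lt_of_adj_getVert ht hp.isPath hi hadj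
  have hrot := hp.posaRotation hi hadj
  intro w hw
  rw [mem_neighborFinset] at hw
  obtain ⟨j, hj, rfl⟩ := hrot.exists_getVert_eq_of_adj hw
  have hjt : j < t := hG.lt_of_adj_getVert ht hrot.isPath hj hw
  rw [getVert_posaRotation hi hadj, ← apply_ite p.getVert]
  exact mem_image_of_mem _ (mem_range.2 (by split_ifs <;> omega))

theorem CircumferenceLE.exists_sum_degree_add_card_sdiff_le [Fintype V]
    (hG : CircumferenceLE G t) (ht : 2 ≤ t) (hne : G ≠ ⊥) :
    ∃ T : Finset V, T.Nonempty ∧ Tᶜ.Nonempty ∧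
      ∑ v ∈ T, (G.degree v + #(G.neighborFinset v \ T)) ≤ #T * t := by
  obtain ⟨x, y, hxy⟩ := ne_bot_iff_exists_adj.1 hne
  have : Nonempty V := ⟨x⟩
  obtain ⟨a, b, p, hp, hmax⟩ := exists_isLongestPath_forall_degree_le G
  have hpos : 0 < p.length :=
    hp.length_le (.cons hxy .nil) (by simpa using hxy.ne)
  have ha : a ∈ headNeighborPreds p :=
    mem_headNeighborPreds.2 ⟨0, hpos, by simpa using p.adj_getVert_succ hpos, p.getVert_zero⟩
  have hb : b ∈ (headNeighborPreds p)ᶜ := mem_compl.2 (end_notMem_headNeighborPreds hp.isPath)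
  refine ⟨headNeighborPreds p, ⟨a, ha⟩, ⟨b, hb⟩, sum_le_card_nsmul _ _ _ fun v hv => ?_⟩
  have hdeg : G.degree v ≤ #(headNeighborPreds p) := by
    obtain ⟨i, hi, hadj, rfl⟩ := mem_headNeighborPreds.1 hv
    exact (hmax _ (hp.posaRotation hi hadj)).trans_eq hp.card_headNeighborPreds.symm
  have hout : #(G.neighborFinset v \ headNeighborPreds p) ≤
      #((range t).image p.getVert \ headNeighborPreds p) :=
    card_le_card (sdiff_subset_sdiff
      (hp.neighborFinset_subset_of_mem_headNeighborPreds hG ht hv) le_rfl)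
  have hseg : #((range t).image p.getVert) ≤ t := card_image_le.trans_eq (card_range t)
  have := card_sdiff_add_card_eq_card (headNeighborPreds_subset_image_range hp.isPath hG ht)
  omega

end headNeighborPreds

section EdgeCount

variable [Fintype V] [DecidableEq V] (G : SimpleGraph V) [DecidableRel G.Adj] (s : Finset V)

theorem sum_card_neighborFinset_inter :
    ∑ v ∈ s, #(G.neighborFinset v ∩ s) = 2 * #(G.induce (s : Set V)).edgeFinset := by
  rw [← sum_degrees_eq_twice_card_edges, ← sum_coe_sort]
  refine sum_congr rfl fun v _ => ?_
  rw [← card_neighborFinset_eq_degree, ← card_map (.subtype (· ∈ s))]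
  congr 1
  ext w
  simp

theorem sum_compl_card_neighborFinset_inter :
    ∑ v ∈ sᶜ, #(G.neighborFinset v ∩ s) = ∑ v ∈ s, #(G.neighborFinset v \ s) := by
  convert sum_card_bipartiteAbove_eq_sum_card_bipartiteBelow G.Adj (s := sᶜ) (t := s)
    using 3 with v _ v _ <;>
  · ext w
    simp [bipartiteAbove, bipartiteBelow, and_comm, G.adj_comm]

theorem sum_degree_eq_add_sum_card_sdiff :
    ∑ v ∈ s, G.degree v =
      2 * #(G.induce (s : Set V)).edgeFinset + ∑ v ∈ s, #(G.neighborFinset v \ s) := by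
  rw [← sum_card_neighborFinset_inter, ← sum_add_distrib]
  exact sum_congr rfl fun v _ => (card_inter_add_card_sdiff (G.neighborFinset v) s).symm

theorem card_edgeFinset_eq_add_sum_card_sdiff :
    #G.edgeFinset = #(G.induce (s : Set V)).edgeFinset +
      #(G.induce ((sᶜ : Finset V) : Set V)).edgeFinset + ∑ v ∈ s, #(G.neighborFinset v \ s) := by
  have hcross : ∑ v ∈ sᶜ, #(G.neighborFinset v \ sᶜ) = ∑ v ∈ s, #(G.neighborFinset v \ s) := by
    simp only [sdiff_compl, inf_eq_inter, sum_compl_card_neighborFinset_inter]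
  have htotal := G.sum_degrees_eq_twice_card_edges
  rw [← sum_add_sum_compl s, sum_degree_eq_add_sum_card_sdiff, sum_degree_eq_add_sum_card_sdiff,
    hcross] at htotal
  omega

end EdgeCount

theorem sum_degree_le_card_edgeFinset_add [Fintype V] (G : SimpleGraph V) [DecidableRel G.Adj]
    (s : Finset V) :
    ∑ v ∈ s, G.degree v ≤ #G.edgeFinset + #(G.induce (s : Set V)).edgeFinset := by
  classical
  have := sum_degree_eq_add_sum_card_sdiff G s
  have := card_edgeFinset_eq_add_sum_card_sdiff G s
  omega

-- The Erdős–Gallai theorem: deleting `T` destroys at most `#T * t / 2` edges.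
theorem CircumferenceLE.two_mul_card_edgeFinset_le {V : Type*} [Fintype V]
    {G : SimpleGraph V} [DecidableRel G.Adj] (hG : CircumferenceLE G t) (ht : 2 ≤ t) :
    2 * #G.edgeFinset ≤ t * (Fintype.card V - 1) := by
  classical
  obtain hbot | hne := eq_or_ne G ⊥
  · simp [edgeFinset_eq_empty.2 hbot]
  obtain ⟨T, hT, hTc, hsum⟩ := hG.exists_sum_degree_add_card_sdiff_le ht hne
  have hTpos := hT.card_pos
  have hTcpos := hTc.card_pos
  have hcard : #Tᶜ + #T = Fintype.card V := card_compl_add_card T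
  have hcoe : Fintype.card ((Tᶜ : Finset V) : Set V) = #Tᶜ := Fintype.card_coe Tᶜ
  have ih := (hG.induce ((Tᶜ : Finset V) : Set V)).two_mul_card_edgeFinset_le ht
  rw [sum_add_distrib, sum_degree_eq_add_sum_card_sdiff] at hsum
  have hedges := card_edgeFinset_eq_add_sum_card_sdiff G T
  calc 2 * #G.edgeFinset
    _ ≤ t * (#Tᶜ - 1) + #T * t := by rw [hcoe] at ih; omega
    _ = t * (Fintype.card V - 1) := by
      rw [mul_comm #T, ← mul_add, show #Tᶜ - 1 + #T = Fintype.card V - 1 by omega]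
termination_by Fintype.card V
decreasing_by omega

section TopSubset

variable {ι : Type*} [Fintype ι]

theorem exists_card_eq_forall_le {α : Type*} [LinearOrder α] (f : ι → α) {m : ℕ}
    (hm : m ≤ Fintype.card ι) : ∃ U : Finset ι, #U = m ∧ ∀ u ∈ U, ∀ v ∉ U, f v ≤ f u := by
  classical
  induction m with
  | zero => exact ⟨∅, by simp⟩
  | succ m ih =>
    obtain ⟨U, hcard, htop⟩ := ih (by omega)
    have hne : Uᶜ.Nonempty := by rw [← card_pos, card_compl]; omega
    obtain ⟨w, hw, hmax⟩ := exists_max_image Uᶜ f hne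
    rw [mem_compl] at hw
    refine ⟨insert w U, by rw [card_insert_of_notMem hw, hcard], fun u hu v hv => ?_⟩
    rw [mem_insert, not_or] at hv
    rcases mem_insert.1 hu with rfl | hu
    · exact hmax v (mem_compl.2 hv.2)
    · exact htop u hu v hv.2

theorem exists_card_le_sum_mul_le_sum {R : Type*} [CommRing R] [LinearOrder R]
    [IsStrictOrderedRing R] {f x : ι → R} (hf : ∀ i, 0 ≤ f i) (hx0 : ∀ i, 0 ≤ x i)
    (hx1 : ∀ i, x i ≤ 1) {m : ℕ} (hsum : ∑ i, x i ≤ m) :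
    ∃ U : Finset ι, #U ≤ m ∧ ∑ i, f i * x i ≤ ∑ i ∈ U, f i := by
  classical
  rcases le_or_gt (Fintype.card ι) m with hcard | hcard
  · exact ⟨univ, hcard, sum_le_sum fun i _ => mul_le_of_le_one_right (hf i) (hx1 i)⟩
  obtain ⟨U, hUcard, htop⟩ := exists_card_eq_forall_le f hcard.le
  have hne : Uᶜ.Nonempty := by rw [← card_pos, card_compl]; omega
  obtain ⟨w, hw, hmax⟩ := exists_max_image Uᶜ f hne
  refine ⟨U, hUcard.le, ?_⟩
  have hpoint (i : ι) : f i * x i ≤ (if i ∈ U then f i - f w else 0) + f w * x i := by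
    split_ifs with hi
    · nlinarith [htop i hi w (mem_compl.1 hw), hx1 i]
    · nlinarith [hmax i (mem_compl.2 hi), hx0 i]
  calc ∑ i, f i * x i
    _ ≤ ∑ i, ((if i ∈ U then f i - f w else 0) + f w * x i) := sum_le_sum fun i _ => hpoint i
    _ = ∑ i ∈ U, f i + f w * (∑ i, x i - m) := by
      rw [sum_add_distrib, sum_ite_mem, univ_inter, sum_sub_distrib, sum_const, hUcard,
        nsmul_eq_mul, ← mul_sum]
      ring
    _ ≤ ∑ i ∈ U, f i :=
      add_le_of_nonpos_right (mul_nonpos_of_nonneg_of_nonpos (hf w) (sub_nonpos.2 hsum))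

end TopSubset

section Hermitian

variable {n 𝕜 : Type*} [RCLike 𝕜] [Fintype n] [DecidableEq n] {A : Matrix n n 𝕜}

theorem diag_eq_sum_eigenvalues_mul_norm_sq (hA : A.IsHermitian) (v : n) :
    A v v = ∑ i, (hA.eigenvalues i : 𝕜) * (‖hA.eigenvectorBasis i v‖ : 𝕜) ^ 2 := by
  have h := congrFun₂ hA.spectral_theorem v v
  rw [Unitary.conjStarAlgAut_apply, Matrix.mul_apply] at h
  rw [h]
  refine sum_congr rfl fun i _ => ?_
  rw [Matrix.mul_diagonal, Matrix.star_apply, hA.eigenvectorUnitary_apply, ← RCLike.mul_conj]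
  simp only [Function.comp_apply, RCLike.star_def]
  ring

theorem sum_norm_sq_eigenvectorBasis (hA : A.IsHermitian) (i : n) :
    ∑ v, ‖hA.eigenvectorBasis i v‖ ^ 2 = 1 := by
  rw [← EuclideanSpace.norm_sq_eq, hA.eigenvectorBasis.orthonormal.1 i, one_pow]

end Hermitian

section Laplacian

open Matrix

variable [Fintype V] [DecidableEq V] (G : SimpleGraph V) [DecidableRel G.Adj]

-- As a quadratic form, `L D⁻¹ L ≤ 2 L`.
theorem sum_sq_lapMatrix_mulVec_div_degree_le {R : Type*} [Field R] [LinearOrder R]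
    [IsStrictOrderedRing R] (x : V → R) :
    ∑ v, (G.lapMatrix R *ᵥ x) v ^ 2 / G.degree v ≤ 2 * (x ⬝ᵥ G.lapMatrix R *ᵥ x) := by
  have hcauchy (v : V) : (G.lapMatrix R *ᵥ x) v ^ 2 / G.degree v ≤
      ∑ u ∈ G.neighborFinset v, (x v - x u) ^ 2 := by
    have hdiff : (G.lapMatrix R *ᵥ x) v = ∑ u ∈ G.neighborFinset v, (x v - x u) := by
      rw [lapMatrix_mulVec_apply, sum_sub_distrib, sum_const, card_neighborFinset_eq_degree,
        nsmul_eq_mul]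
    rw [hdiff, ← card_neighborFinset_eq_degree]
    exact div_le_of_le_mul₀ (Nat.cast_nonneg _) (sum_nonneg fun _ _ => sq_nonneg _)
      (sq_sum_le_card_mul_sum_sq.trans_eq (mul_comm _ _))
  calc ∑ v, (G.lapMatrix R *ᵥ x) v ^ 2 / G.degree v
    _ ≤ ∑ v, ∑ u ∈ G.neighborFinset v, (x v - x u) ^ 2 := sum_le_sum fun v _ => hcauchy v
    _ = 2 * (x ⬝ᵥ G.lapMatrix R *ᵥ x) := by
      rw [← toLinearMap₂'_apply', lapMatrix_toLinearMap₂', mul_div_cancel₀ _ two_ne_zero]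
      simp only [neighborFinset_eq_filter, sum_filter]

theorem sum_eigenvalue_mul_sq_div_degree_le {R : Type*} [Field R] [LinearOrder R]
    [IsStrictOrderedRing R] {μ : R} {x : V → R} (hx : G.lapMatrix R *ᵥ x = μ • x) :
    ∑ v, μ * x v ^ 2 / G.degree v ≤ 2 * ∑ v, x v ^ 2 := by
  rcases le_or_gt μ 0 with hμ | hμ
  · have hneg (v : V) : μ * x v ^ 2 / G.degree v ≤ 0 :=
      div_nonpos_of_nonpos_of_nonneg (mul_nonpos_of_nonpos_of_nonneg hμ (sq_nonneg _))
        (Nat.cast_nonneg _)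
    exact (sum_nonpos fun v _ => hneg v).trans (by positivity)
  have h := sum_sq_lapMatrix_mulVec_div_degree_le G x
  rw [hx] at h
  have hl : ∑ v, (μ • x) v ^ 2 / G.degree v = μ * ∑ v, μ * x v ^ 2 / G.degree v := by
    rw [mul_sum]
    exact sum_congr rfl fun v _ => by simp only [Pi.smul_apply, smul_eq_mul]; ring
  have hr : 2 * (x ⬝ᵥ μ • x) = μ * (2 * ∑ v, x v ^ 2) := by
    rw [dotProduct_smul, smul_eq_mul, mul_left_comm]
    simp only [dotProduct, ← sq]
  rw [hl, hr] at h
  exact le_of_mul_le_mul_left h hμ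

theorem sum_sq_eigenvectorBasis_lapMatrix (i : V) :
    ∑ v, (posSemidef_lapMatrix ℝ G).isHermitian.eigenvectorBasis i v ^ 2 = 1 := by
  simpa using sum_norm_sq_eigenvectorBasis (posSemidef_lapMatrix ℝ G).isHermitian i

/-- The diagonal entry at `v` of the part `∑ i ∈ I, λᵢ yᵢ yᵢᵀ` of the spectral decomposition of the
Laplacian: the share of the eigenvalues indexed by `I` that is carried by the vertex `v`. -/
noncomputable def lapMass (I : Finset V) (v : V) : ℝ :=
  ∑ i ∈ I, (posSemidef_lapMatrix ℝ G).isHermitian.eigenvalues i *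
    (posSemidef_lapMatrix ℝ G).isHermitian.eigenvectorBasis i v ^ 2

theorem eigenvalues_lapMatrix_mul_sq_nonneg (i v : V) :
    0 ≤ (posSemidef_lapMatrix ℝ G).isHermitian.eigenvalues i *
      (posSemidef_lapMatrix ℝ G).isHermitian.eigenvectorBasis i v ^ 2 :=
  mul_nonneg ((posSemidef_lapMatrix ℝ G).eigenvalues_nonneg i) (sq_nonneg _)

theorem lapMass_nonneg (I : Finset V) (v : V) : 0 ≤ lapMass G I v :=
  sum_nonneg fun i _ => eigenvalues_lapMatrix_mul_sq_nonneg G i v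

theorem lapMass_univ (v : V) : lapMass G univ v = G.degree v := by
  have hdiag := diag_eq_sum_eigenvalues_mul_norm_sq (posSemidef_lapMatrix ℝ G).isHermitian v
  simpa [lapMass, lapMatrix, degMatrix] using hdiag.symm

theorem lapMass_le_degree (I : Finset V) (v : V) : lapMass G I v ≤ G.degree v :=
  (sum_le_univ_sum_of_nonneg fun i => eigenvalues_lapMatrix_mul_sq_nonneg G i v).trans_eq
    (lapMass_univ G v)

theorem sum_lapMass (I : Finset V) :
    ∑ v, lapMass G I v = ∑ i ∈ I, (posSemidef_lapMatrix ℝ G).isHermitian.eigenvalues i := by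
  unfold lapMass
  rw [sum_comm]
  refine sum_congr rfl fun i _ => ?_
  rw [← mul_sum, sum_sq_eigenvectorBasis_lapMatrix, mul_one]

theorem sum_lapMass_div_degree_le (I : Finset V) :
    ∑ v, lapMass G I v / G.degree v ≤ (2 * #I : ℕ) := by
  have hL := posSemidef_lapMatrix ℝ G
  have heigen (i : V) : ∑ v, hL.isHermitian.eigenvalues i *
      hL.isHermitian.eigenvectorBasis i v ^ 2 / G.degree v ≤ 2 := by
    have := sum_eigenvalue_mul_sq_div_degree_le G
      (hL.isHermitian.mulVec_eigenvectorBasis i)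
    rwa [sum_sq_eigenvectorBasis_lapMatrix, mul_one] at this
  simp only [lapMass, sum_div]
  rw [sum_comm]
  exact (sum_le_card_nsmul I _ 2 fun i _ => heigen i).trans_eq (by simp [mul_comm])

theorem exists_sum_eigenvalues_le_sum_degree (I : Finset V) :
    ∃ U : Finset V, #U ≤ 2 * #I ∧
      ∑ i ∈ I, (posSemidef_lapMatrix ℝ G).isHermitian.eigenvalues i ≤
        ∑ v ∈ U, (G.degree v : ℝ) := by
  obtain ⟨U, hU, hle⟩ := exists_card_le_sum_mul_le_sum (f := fun v => (G.degree v : ℝ))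
    (fun v => Nat.cast_nonneg _) (fun v => div_nonneg (lapMass_nonneg G I v) (Nat.cast_nonneg _))
    (fun v => div_le_one_of_le₀ (lapMass_le_degree G I v) (Nat.cast_nonneg _))
    (sum_lapMass_div_degree_le G I)
  have hmass (v : V) : G.degree v * (lapMass G I v / G.degree v) = lapMass G I v :=
    mul_div_cancel_of_imp' fun h =>
      le_antisymm (h ▸ lapMass_le_degree G I v) (lapMass_nonneg G I v)
  refine ⟨U, hU, ?_⟩
  simpa only [hmass, sum_lapMass] using hle

end Laplacian

theorem exists_sum_ithLargest_eq {n k : ℕ} (f : Fin n → ℝ) (hk : k ≤ n) :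
    ∃ I : Finset (Fin n), #I = k ∧ ∑ i ∈ Icc 1 k, ithLargest f i = ∑ i ∈ I, f i := by
  let e : Fin k ↪ Fin n :=
    (Fin.castLEEmb hk).trans (Fin.revPerm.trans (Tuple.sort f)).toEmbedding
  refine ⟨univ.map e, by simp, ?_⟩
  rw [sum_map, ← Ico_add_one_right_eq_Icc, sum_Ico_eq_sum_range, add_tsub_cancel_right, sum_range]
  refine sum_congr rfl fun j _ => ?_
  rw [ithLargest, dif_pos (by omega)]
  simp only [add_tsub_cancel_left]
  rfl

theorem sum_lapEigs_le_of_no_long_cycle_general [Fintype V] [DecidableEq V] [DecidableRel G.Adj]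
    (hG : CircumferenceLE G t) (ht : 2 ≤ t) {I : Finset V} (hI : I.Nonempty) :
    ∑ i ∈ I, (posSemidef_lapMatrix ℝ G).isHermitian.eigenvalues i ≤
      (#G.edgeFinset : ℝ) + (⌊(t : ℝ) * (2 * #I - 1) / 2⌋ : ℝ) := by
  obtain ⟨U, hU, hsum⟩ := exists_sum_eigenvalues_le_sum_degree G I
  have hdegree := sum_degree_le_card_edgeFinset_add G U
  have hinduced : 2 * #(G.induce (U : Set V)).edgeFinset ≤ t * (2 * #I - 1) :=
    ((hG.induce U).two_mul_card_edgeFinset_le ht).trans <| Nat.mul_le_mul_left t <|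
      Nat.sub_le_sub_right ((Fintype.card_coe U).trans_le hU) 1
  have hfloor : (#(G.induce (U : Set V)).edgeFinset : ℤ) ≤ ⌊(t : ℝ) * (2 * #I - 1) / 2⌋ := by
    rw [Int.le_floor, le_div_iff₀ two_pos, mul_comm, Int.cast_natCast]
    have := (Nat.cast_le (α := ℝ)).2 hinduced
    push_cast [Nat.cast_sub (show 1 ≤ 2 * #I by have := hI.card_pos; omega)] at this
    exact this
  calc ∑ i ∈ I, (posSemidef_lapMatrix ℝ G).isHermitian.eigenvalues i
    _ ≤ ∑ v ∈ U, (G.degree v : ℝ) := hsum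
    _ ≤ #G.edgeFinset + #(G.induce (U : Set V)).edgeFinset := mod_cast hdegree
    _ ≤ #G.edgeFinset + ⌊(t : ℝ) * (2 * #I - 1) / 2⌋ := by
      gcongr
      exact mod_cast hfloor

end LongCycles

/-- for `k ≥ 1`, `t ≥ 2`, and a graph `G` with at least `k` vertices
containing no cycle of length greater than `t`,
`∑_{i=1}^k λ_i(L(G)) ≤ |E| + ⌊t(2k − 1)/2⌋`. -/
theorem sum_lapEigs_le_of_no_long_cycle {n : ℕ} (G : SimpleGraph (Fin n)) [DecidableRel G.Adj]
    (t : ℕ) (ht : 2 ≤ t)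
    (hG : ∀ (v : Fin n) (c : G.Walk v v), c.IsCycle → c.length ≤ t)
    (k : ℕ) (hk1 : 1 ≤ k) (hk2 : k ≤ n) :
    ∑ i ∈ Finset.Icc 1 k, ithLargest (lapEigs G) i ≤
      (G.edgeFinset.card : ℝ) + (⌊(t : ℝ) * (2 * (k : ℝ) - 1) / 2⌋ : ℝ) := by
  obtain ⟨I, rfl, hsum⟩ := exists_sum_ithLargest_eq (lapEigs G) hk2
  exact hsum.trans_le (sum_lapEigs_le_of_no_long_cycle_general hG ht (card_pos.1 hk1))
end

section
/- Let V be a finite linearly ordered set. For finite subsets σ ⊂ τ of V with |τ \ σ| = 1, define (τ : σ) = (−1)^{|{v ∈ τ : v < u}|}, where u is the unique element of τ \ σ. Let τ and η be finite subsets of V with |τ| = |η| and |τ ∩ η| = |τ| − 1. Then (τ∪η : τ)·(τ∪η : η) = −(τ : τ∩η)·(η : τ∩η). -/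
/-- For finite subsets `σ ⊂ τ` of a linearly ordered type with `|τ \ σ| = 1`, the incidence
sign `(τ : σ) = (−1)^{|{v ∈ τ : v < u}|}`, where `u` is the unique element of `τ \ σ`.
(When `τ \ σ` is a singleton `{u}`, the condition `∃ u' ∈ τ \ σ, v < u'` used below is
equivalent to `v < u`, so this agrees with the usual definition.) -/
def incSign {V : Type*} [LinearOrder V] (τ σ : Finset V) : ℤ :=
  (-1) ^ (τ.filter (fun v => ∃ u ∈ τ \ σ, v < u)).card

section

variable {V : Type*} [LinearOrder V] {σ : Finset V} {a b : V}

theorem incSign_insert (ha : a ∉ σ) :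
    incSign (insert a σ) σ = (-1) ^ (σ.filter (· < a)).card := by
  have hsdiff : insert a σ \ σ = {a} := by
    rw [Finset.insert_sdiff_of_notMem _ ha, Finset.sdiff_self, insert_empty_eq]
  simp only [incSign, hsdiff, Finset.mem_singleton, exists_eq_left]
  rw [Finset.filter_insert, if_neg (lt_irrefl a)]

theorem incSign_insert_insert_of_lt (ha : a ∉ σ) (hb : b ∉ σ) (hab : a < b) :
    incSign (insert b (insert a σ)) (insert a σ) = -incSign (insert b σ) σ := by
  have hb' : b ∉ insert a σ := Finset.mem_insert.not.mpr (not_or.mpr ⟨hab.ne', hb⟩)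
  have ha' : a ∉ σ.filter (· < b) := fun h => ha (Finset.mem_of_mem_filter a h)
  rw [incSign_insert hb', incSign_insert hb, Finset.filter_insert, if_pos hab,
    Finset.card_insert_of_notMem ha', pow_succ, mul_neg_one]

theorem incSign_insert_insert_of_gt (hb : b ∉ σ) (hab : b < a) :
    incSign (insert b (insert a σ)) (insert a σ) = incSign (insert b σ) σ := by
  have hb' : b ∉ insert a σ := Finset.mem_insert.not.mpr (not_or.mpr ⟨hab.ne, hb⟩)
  rw [incSign_insert hb', incSign_insert hb, Finset.filter_insert, if_neg hab.not_gt]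

-- Only the larger of `a` and `b` sees the other one below it, so exactly one sign flips.
theorem incSign_insert_insert_mul (ha : a ∉ σ) (hb : b ∉ σ) (hab : a ≠ b) :
    incSign (insert b (insert a σ)) (insert a σ) * incSign (insert a (insert b σ)) (insert b σ) =
      -(incSign (insert a σ) σ * incSign (insert b σ) σ) := by
  rcases hab.lt_or_gt with hlt | hgt
  · rw [incSign_insert_insert_of_lt ha hb hlt, incSign_insert_insert_of_gt ha hlt]
    ring
  · rw [incSign_insert_insert_of_gt hb hgt, incSign_insert_insert_of_lt hb ha hgt]
    ring

end

/-- if `τ, η` are finite subsets of a linearly ordered set with `|τ| = |η|`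
and `|τ ∩ η| = |τ| − 1`, then `(τ∪η : τ)·(τ∪η : η) = −(τ : τ∩η)·(η : τ∩η)`. -/
theorem incSign_union_mul_eq_neg {V : Type*} [LinearOrder V] (τ η : Finset V)
    (hcard : τ.card = η.card) (hint : (τ ∩ η).card + 1 = τ.card) :
    incSign (τ ∪ η) τ * incSign (τ ∪ η) η =
      -(incSign τ (τ ∩ η) * incSign η (τ ∩ η)) := by
  obtain ⟨a, ha, hτ⟩ := Finset.exists_eq_insert_iff.mpr ⟨Finset.inter_subset_left, hint⟩
  obtain ⟨b, hb, hη⟩ :=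
    Finset.exists_eq_insert_iff.mpr ⟨Finset.inter_subset_right, hint.trans hcard⟩
  have hab : a ≠ b := by
    rintro rfl
    exact ha (Finset.mem_inter.mpr
      ⟨hτ ▸ Finset.mem_insert_self a _, hη ▸ Finset.mem_insert_self a _⟩)
  have hunion_left : τ ∪ η = insert b τ := by
    rw [← hη, Finset.union_insert, Finset.union_eq_left.mpr Finset.inter_subset_left]
  have hunion_right : τ ∪ η = insert a η := by
    rw [← hτ, Finset.insert_union, Finset.union_eq_right.mpr Finset.inter_subset_right]
  have hmul := incSign_insert_insert_mul ha hb hab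
  rwa [hτ, hη, ← hunion_left, ← hunion_right] at hmul
end

section
/- Let G = (V,E) be a finite simple bipartite graph with bipartition V = V_1 ∪ V_2 (every edge has one endpoint in V_1 and one in V_2), and let k be an integer with 1 ≤ k ≤ |V|. Then ∑_{i=1}^{k} λ_i(L(G)) ≤ ∑_{i=1}^{min{k, |V_1|}} d_i(G; V_1) + ∑_{i=1}^{min{k, |V_2|}} d_i(G; V_2), where d_i(G; V_j) denotes the i-th largest degree among the vertices belonging to V_j. -/
open Finset

/-- The `i`-th largest value (1-indexed) among `f v` for `v` in the finite set `s`,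
counted with multiplicity. -/
noncomputable def ithLargestOn {n : ℕ} (s : Finset (Fin n)) (f : Fin n → ℝ) (i : ℕ) : ℝ :=
  ithLargest (fun j : Fin s.card => f ((s.orderIsoOfFin rfl j) : Fin n)) i

/-!
Let `A` be a positive semidefinite matrix whose principal submatrix on `W` is diagonal; the
Laplacian is such a matrix for every independent set `W`. In the semi-inner product defined by `A`
the coordinate vectors of `W` are orthogonal, so Bessel's inequality applied to a unit eigenvector
`x` with eigenvalue `μ` gives `∑_{w ∈ W} μ |x w|² / A w w ≤ 1`.

Fix `k` unit eigenvectors and let `c w` be the sum of `μ |x w|²` over them. Then `∑ c w` is the sum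
of the `k` eigenvalues, `0 ≤ c w ≤ A w w` by the spectral theorem, and `∑_{w ∈ W} c w / A w w ≤ k`.
A fractional knapsack argument now bounds `∑_{w ∈ W} c w` by the sum of the `k` largest `A w w`
with `w ∈ W`, and it remains to add this up over sets `W` covering all indices.
-/

theorem sum_mul_le_sum_of_sum_le_card {ι R : Type*} [Fintype ι] [CommRing R] [LinearOrder R]
    [IsStrictOrderedRing R] {f t : ι → R} {S : Finset ι} (hf : ∀ i, 0 ≤ f i)
    (hS : ∀ i ∈ S, ∀ j ∉ S, f j ≤ f i) (ht₀ : ∀ i, 0 ≤ t i) (ht₁ : ∀ i, t i ≤ 1)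
    (ht : ∑ i, t i ≤ #S) : ∑ i, f i * t i ≤ ∑ i ∈ S, f i := by
  classical
  rcases S.eq_empty_or_nonempty with rfl | hne
  · have ht_zero : t = 0 :=
      (Fintype.sum_eq_zero_iff_of_nonneg ht₀).1 <|
        le_antisymm (by simpa using ht) (sum_nonneg fun i _ => ht₀ i)
    simp [ht_zero]
  obtain ⟨b, hbS, hb⟩ := S.exists_min_image f hne
  have exchange (i : ι) :
      f i * t i - (if i ∈ S then f i else 0) ≤ f b * (t i - if i ∈ S then 1 else 0) := by
    split_ifs with hi
    · nlinarith [hb i hi, ht₁ i]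
    · nlinarith [hS b hbS i hi, ht₀ i]
  have hsum := sum_le_sum fun i (_ : i ∈ univ) => exchange i
  simp only [← mul_sum, sum_sub_distrib, sum_ite_mem, univ_inter, sum_const, nsmul_eq_mul,
    mul_one] at hsum
  nlinarith [hf b]

theorem sum_le_sum_sum_of_cover {ι κ M : Type*} [Fintype ι] [Fintype κ] [AddCommMonoid M]
    [PartialOrder M] [IsOrderedAddMonoid M] {c : ι → M} (hc : ∀ v, 0 ≤ c v) {V : κ → Finset ι}
    (hV : ∀ v, ∃ j, v ∈ V j) : ∑ v, c v ≤ ∑ j, ∑ v ∈ V j, c v := by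
  classical
  calc ∑ v, c v ≤ ∑ v, ∑ j, if v ∈ V j then c v else 0 := by
        refine sum_le_sum fun v _ => ?_
        obtain ⟨j, hj⟩ := hV v
        exact (if_pos hj).ge.trans <|
          single_le_sum (f := fun j => if v ∈ V j then c v else 0)
            (fun i _ => ite_nonneg (hc v) le_rfl) (mem_univ j)
    _ = ∑ j, ∑ v ∈ V j, c v := by
        rw [sum_comm]
        simp only [sum_ite_mem, univ_inter]

section OrderStatistics

variable {m : ℕ}

/-- The permutation listing the indices of a tuple by decreasing value: position `j` (counted
from `0`) holds an index of the `(j + 1)`-st largest entry. -/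
noncomputable def sortDesc (f : Fin m → ℝ) : Equiv.Perm (Fin m) :=
  Fin.revPerm.trans (Tuple.sort f)

theorem antitone_comp_sortDesc (f : Fin m → ℝ) : Antitone (f ∘ sortDesc f) :=
  (Tuple.monotone_sort f).comp_antitone Fin.rev_anti

theorem ithLargest_succ (f : Fin m → ℝ) (j : Fin m) :
    ithLargest f (j + 1) = f (sortDesc f j) :=
  dif_pos (by omega)

/-- The indices of the `r` largest entries of a tuple, ties being broken by `sortDesc`. -/
noncomputable def topIndices (f : Fin m → ℝ) {r : ℕ} (hr : r ≤ m) : Finset (Fin m) :=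
  univ.map ((Fin.castLEEmb hr).trans (sortDesc f).toEmbedding)

theorem card_topIndices (f : Fin m → ℝ) {r : ℕ} (hr : r ≤ m) : #(topIndices f hr) = r := by
  simp [topIndices]

theorem sortDesc_mem_topIndices (f : Fin m → ℝ) {r : ℕ} (hr : r ≤ m) (j : Fin m) :
    sortDesc f j ∈ topIndices f hr ↔ (j : ℕ) < r := by
  simp only [topIndices, mem_map, mem_univ, true_and, Function.Embedding.trans_apply,
    Equiv.coe_toEmbedding, EmbeddingLike.apply_eq_iff_eq]
  exact ⟨by rintro ⟨i, rfl⟩; exact i.isLt, fun hj => ⟨⟨j, hj⟩, rfl⟩⟩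

theorem le_of_mem_topIndices_of_notMem {f : Fin m → ℝ} {r : ℕ} {hr : r ≤ m} {a b : Fin m}
    (ha : a ∈ topIndices f hr) (hb : b ∉ topIndices f hr) : f b ≤ f a := by
  obtain ⟨i, rfl⟩ := (sortDesc f).surjective a
  obtain ⟨j, rfl⟩ := (sortDesc f).surjective b
  rw [sortDesc_mem_topIndices] at ha hb
  exact antitone_comp_sortDesc f (Fin.le_def.2 (by omega))

theorem sum_ithLargest_eq_sum_topIndices (f : Fin m → ℝ) {r : ℕ} (hr : r ≤ m) :
    ∑ i ∈ Icc 1 r, ithLargest f i = ∑ a ∈ topIndices f hr, f a := by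
  calc ∑ i ∈ Icc 1 r, ithLargest f i
      = ∑ j ∈ range r, ithLargest f (j + 1) := by
        rw [range_eq_Ico, sum_Ico_add' (ithLargest f) 0 r 1, zero_add]
        rfl
    _ = ∑ j : Fin r, ithLargest f (j + 1) := (Fin.sum_univ_eq_sum_range _ r).symm
    _ = ∑ j : Fin r, f (sortDesc f (Fin.castLE hr j)) :=
        sum_congr rfl fun j _ => ithLargest_succ f (Fin.castLE hr j)
    _ = ∑ a ∈ topIndices f hr, f a := by
        rw [topIndices, sum_map]
        rfl

theorem sum_mul_le_sum_ithLargest {f t : Fin m → ℝ} {k : ℕ} (hf : ∀ i, 0 ≤ f i)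
    (ht₀ : ∀ i, 0 ≤ t i) (ht₁ : ∀ i, t i ≤ 1) (ht : ∑ i, t i ≤ k) :
    ∑ i, f i * t i ≤ ∑ i ∈ Icc 1 (min k m), ithLargest f i := by
  rw [sum_ithLargest_eq_sum_topIndices f (min_le_right k m)]
  refine sum_mul_le_sum_of_sum_le_card hf
    (fun _ ha _ hb => le_of_mem_topIndices_of_notMem ha hb) ht₀ ht₁ ?_
  rw [card_topIndices, Nat.cast_min]
  exact le_min ht (by simpa using sum_le_sum fun i (_ : i ∈ univ) => ht₁ i)

theorem sum_eq_sum_orderIsoOfFin {α M : Type*} [LinearOrder α] [AddCommMonoid M] (W : Finset α)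
    (g : α → M) : ∑ a ∈ W, g a = ∑ j : Fin #W, g (W.orderIsoOfFin rfl j) := by
  rw [← sum_coe_sort W]
  exact ((W.orderIsoOfFin rfl).toEquiv.sum_comp fun a : W => g a).symm

theorem sum_mul_le_sum_ithLargestOn {W : Finset (Fin m)} {f t : Fin m → ℝ} {k : ℕ}
    (hf : ∀ i ∈ W, 0 ≤ f i) (ht₀ : ∀ i ∈ W, 0 ≤ t i) (ht₁ : ∀ i ∈ W, t i ≤ 1)
    (ht : ∑ i ∈ W, t i ≤ k) :
    ∑ i ∈ W, f i * t i ≤ ∑ i ∈ Icc 1 (min k #W), ithLargestOn W f i := by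
  rw [sum_eq_sum_orderIsoOfFin] at ht ⊢
  exact sum_mul_le_sum_ithLargest (fun j => hf _ (W.orderIsoOfFin rfl j).2)
    (fun j => ht₀ _ (W.orderIsoOfFin rfl j).2) (fun j => ht₁ _ (W.orderIsoOfFin rfl j).2) ht

end OrderStatistics

section Bessel

open Matrix RCLike
open scoped ComplexOrder

variable {𝕜 ι : Type*} [RCLike 𝕜] [Fintype ι] {A : Matrix ι ι 𝕜} {W : Finset ι}

theorem re_star_dotProduct_mulVec_comm (hA : A.IsHermitian) (x y : ι → 𝕜) :
    re (star x ⬝ᵥ A *ᵥ y) = re (star y ⬝ᵥ A *ᵥ x) := by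
  have hstar : star x ⬝ᵥ A *ᵥ y = star (star y ⬝ᵥ A *ᵥ x) := by
    rw [star_dotProduct, star_mulVec, hA.eq, dotProduct_mulVec]
  rw [hstar, star_def, conj_re]

theorem two_mul_re_dotProduct_sub_le (hA : A.PosSemidef) (x a : ι → 𝕜) :
    2 * re (star a ⬝ᵥ A *ᵥ x) - re (star a ⬝ᵥ A *ᵥ a) ≤ re (star x ⬝ᵥ A *ᵥ x) := by
  have hpos := hA.re_dotProduct_nonneg (x - a)
  simp only [star_sub, mulVec_sub, dotProduct_sub, sub_dotProduct, map_sub] at hpos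
  linarith [re_star_dotProduct_mulVec_comm hA.isHermitian x a]

theorem mulVec_apply_of_pairwise_eq_zero (hW : (W : Set ι).Pairwise fun u v => A u v = 0)
    {a : ι → 𝕜} (ha : ∀ v ∉ W, a v = 0) {w : ι} (hw : w ∈ W) :
    (A *ᵥ a) w = A w w * a w := by
  rw [mulVec, dotProduct]
  refine sum_eq_single w (fun v _ hvw => ?_) (by simp)
  by_cases hv : v ∈ W
  · rw [hW hw hv hvw.symm, zero_mul]
  · rw [ha v hv, mul_zero]

-- Bessel's inequality for the coordinate vectors of `W` in the semi-inner product of `A`. Terms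
-- with `A w w = 0` are `0` by the division convention.
theorem sum_sq_norm_mulVec_div_diag_le (hA : A.PosSemidef)
    (hW : (W : Set ι).Pairwise fun u v => A u v = 0) (x : ι → 𝕜) :
    ∑ w ∈ W, ‖(A *ᵥ x) w‖ ^ 2 / re (A w w) ≤ re (star x ⬝ᵥ A *ᵥ x) := by
  classical
  let a : ι → 𝕜 := fun w => if w ∈ W then (A *ᵥ x) w / A w w else 0
  have ha_mem {w : ι} (hw : w ∈ W) : a w = (A *ᵥ x) w / A w w := if_pos hw
  have ha_notMem (w : ι) (hw : w ∉ W) : a w = 0 := if_neg hw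
  have dotProduct_a (y : ι → 𝕜) : star a ⬝ᵥ y = ∑ w ∈ W, star (a w) * y w :=
    (sum_subset (subset_univ W) fun w _ hw => by simp [ha_notMem w hw]).symm
  have hAa : star a ⬝ᵥ A *ᵥ a = star a ⬝ᵥ A *ᵥ x := by
    rw [dotProduct_a, dotProduct_a]
    refine sum_congr rfl fun w hw => ?_
    rw [mulVec_apply_of_pairwise_eq_zero hW ha_notMem hw, ha_mem hw]
    rcases eq_or_ne (A w w) 0 with h | h
    · simp [h]
    · rw [mul_div_cancel₀ _ h]
  have hAx : re (star a ⬝ᵥ A *ᵥ x) = ∑ w ∈ W, ‖(A *ᵥ x) w‖ ^ 2 / re (A w w) := by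
    rw [dotProduct_a, map_sum]
    refine sum_congr rfl fun w hw => ?_
    have hdiag : (re (A w w) : 𝕜) = A w w := hA.isHermitian.coe_re_apply_self w
    rw [ha_mem hw, ← hdiag, ofReal_re, star_def, map_div₀, conj_ofReal, div_mul_eq_mul_div,
      RCLike.conj_mul, ← ofReal_pow, ← ofReal_div, ofReal_re]
  linarith [two_mul_re_dotProduct_sub_le hA x a, congrArg re hAa]

theorem sum_mul_sq_norm_div_diag_le_of_mulVec_eq_smul (hA : A.PosSemidef)
    (hW : (W : Set ι).Pairwise fun u v => A u v = 0) {x : ι → 𝕜} {μ : ℝ} (hμ : 0 ≤ μ)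
    (hx : A *ᵥ x = μ • x) :
    ∑ w ∈ W, μ * ‖x w‖ ^ 2 / re (A w w) ≤ ∑ v, ‖x v‖ ^ 2 := by
  rcases hμ.eq_or_lt with rfl | hμ
  · simpa using sum_nonneg fun v (_ : v ∈ univ) => sq_nonneg ‖x v‖
  have hbessel := sum_sq_norm_mulVec_div_diag_le hA hW x
  have hright : re (star x ⬝ᵥ A *ᵥ x) = μ * ∑ v, ‖x v‖ ^ 2 := by
    rw [hx, dotProduct_smul, smul_re, dotProduct, map_sum]
    simp only [Pi.star_apply, star_def, RCLike.conj_mul, ← ofReal_pow, ofReal_re]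
  have hleft : ∑ w ∈ W, ‖(A *ᵥ x) w‖ ^ 2 / re (A w w)
      = μ * ∑ w ∈ W, μ * ‖x w‖ ^ 2 / re (A w w) := by
    rw [mul_sum]
    refine sum_congr rfl fun w _ => ?_
    rw [hx, Pi.smul_apply, norm_smul, Real.norm_of_nonneg hμ.le]
    ring
  rw [hleft, hright] at hbessel
  exact le_of_mul_le_mul_left hbessel hμ

end Bessel

section SpectralDiagonal

open Matrix RCLike
open scoped ComplexOrder

variable {𝕜 ι : Type*} [RCLike 𝕜] [Fintype ι] [DecidableEq ι] {A : Matrix ι ι 𝕜}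

/-- The diagonal entry at `w` of the part of a Hermitian matrix carried by the eigenvectors with
index in `S`, that is of `∑ i ∈ S, λ_i x_i x_iᴴ`. -/
noncomputable def spectralDiag (hA : A.IsHermitian) (S : Finset ι) (w : ι) : ℝ :=
  ∑ i ∈ S, hA.eigenvalues i * ‖hA.eigenvectorBasis i w‖ ^ 2

theorem sum_sq_norm_eigenvectorBasis (hA : A.IsHermitian) (i : ι) :
    ∑ w, ‖hA.eigenvectorBasis i w‖ ^ 2 = 1 := by
  rw [← EuclideanSpace.norm_sq_eq, hA.eigenvectorBasis.norm_eq_one, one_pow]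

theorem sum_spectralDiag (hA : A.IsHermitian) (S : Finset ι) :
    ∑ w, spectralDiag hA S w = ∑ i ∈ S, hA.eigenvalues i := by
  simp only [spectralDiag]
  rw [sum_comm]
  simp only [← mul_sum, sum_sq_norm_eigenvectorBasis, mul_one]

theorem spectralDiag_univ (hA : A.IsHermitian) (w : ι) :
    spectralDiag hA univ w = re (A w w) := by
  have hentry := congrFun (congrFun hA.spectral_theorem w) w
  rw [Unitary.conjStarAlgAut_apply, Matrix.mul_apply] at hentry
  simp only [mul_diagonal, Matrix.star_apply, Function.comp_apply,
    hA.eigenvectorUnitary_apply] at hentry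
  rw [hentry, map_sum]
  refine sum_congr rfl fun i _ => ?_
  rw [mul_right_comm, star_def, mul_conj, ← ofReal_pow, ← ofReal_mul, ofReal_re, mul_comm]

theorem spectralDiag_nonneg (hA : A.PosSemidef) (S : Finset ι) (w : ι) :
    0 ≤ spectralDiag hA.isHermitian S w :=
  sum_nonneg fun i _ => mul_nonneg (hA.eigenvalues_nonneg i) (sq_nonneg _)

theorem spectralDiag_le_diag (hA : A.PosSemidef) (S : Finset ι) (w : ι) :
    spectralDiag hA.isHermitian S w ≤ re (A w w) := by
  rw [← spectralDiag_univ hA.isHermitian]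
  exact sum_le_sum_of_subset_of_nonneg (subset_univ S)
    fun i _ _ => mul_nonneg (hA.eigenvalues_nonneg i) (sq_nonneg _)

theorem sum_spectralDiag_div_diag_le_card (hA : A.PosSemidef) (S : Finset ι) {W : Finset ι}
    (hW : (W : Set ι).Pairwise fun u v => A u v = 0) :
    ∑ w ∈ W, spectralDiag hA.isHermitian S w / re (A w w) ≤ #S := by
  simp only [spectralDiag, sum_div]
  rw [sum_comm, card_eq_sum_ones, Nat.cast_sum, Nat.cast_one]
  refine sum_le_sum fun i _ => ?_
  rw [← sum_sq_norm_eigenvectorBasis hA.isHermitian i]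
  exact sum_mul_sq_norm_div_diag_le_of_mulVec_eq_smul hA hW (hA.eigenvalues_nonneg i)
    (hA.isHermitian.mulVec_eigenvectorBasis i)

end SpectralDiagonal

section EigenvalueSum

open RCLike
open scoped ComplexOrder

variable {𝕜 : Type*} [RCLike 𝕜] {n : ℕ} {A : Matrix (Fin n) (Fin n) 𝕜}

theorem sum_spectralDiag_le_sum_ithLargestOn (hA : A.PosSemidef) (S : Finset (Fin n))
    {W : Finset (Fin n)} (hW : (W : Set (Fin n)).Pairwise fun u v => A u v = 0) :
    ∑ w ∈ W, spectralDiag hA.isHermitian S w ≤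
      ∑ i ∈ Icc 1 (min #S #W), ithLargestOn W (fun w => re (A w w)) i := by
  have hc₀ := spectralDiag_nonneg hA S
  have hc₁ := spectralDiag_le_diag hA S
  have hd (w : Fin n) : 0 ≤ re (A w w) := (hc₀ w).trans (hc₁ w)
  calc ∑ w ∈ W, spectralDiag hA.isHermitian S w
      = ∑ w ∈ W, re (A w w) * (spectralDiag hA.isHermitian S w / re (A w w)) :=
        sum_congr rfl fun w _ => (mul_div_cancel_of_imp'
          fun h => le_antisymm (h ▸ hc₁ w) (hc₀ w)).symm
    _ ≤ _ := sum_mul_le_sum_ithLargestOn (fun w _ => hd w)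
        (fun w _ => div_nonneg (hc₀ w) (hd w)) (fun w _ => div_le_one_of_le₀ (hc₁ w) (hd w))
        (sum_spectralDiag_div_diag_le_card hA S hW)

theorem sum_ithLargest_eigenvalues_le {κ : Type*} [Fintype κ] (hA : A.PosSemidef)
    {V : κ → Finset (Fin n)} (hcover : ∀ v, ∃ j, v ∈ V j)
    (hdiag : ∀ j, (V j : Set (Fin n)).Pairwise fun u v => A u v = 0) {k : ℕ} (hk : k ≤ n) :
    ∑ i ∈ Icc 1 k, ithLargest hA.isHermitian.eigenvalues i ≤
      ∑ j, ∑ i ∈ Icc 1 (min k #(V j)), ithLargestOn (V j) (fun w => re (A w w)) i := by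
  set S := topIndices hA.isHermitian.eigenvalues hk
  have hS : #S = k := card_topIndices _ hk
  calc ∑ i ∈ Icc 1 k, ithLargest hA.isHermitian.eigenvalues i
      = ∑ v, spectralDiag hA.isHermitian S v := by
        rw [sum_spectralDiag, sum_ithLargest_eq_sum_topIndices _ hk]
    _ ≤ ∑ j, ∑ v ∈ V j, spectralDiag hA.isHermitian S v :=
        sum_le_sum_sum_of_cover (spectralDiag_nonneg hA S) hcover
    _ ≤ _ := sum_le_sum fun j _ => hS ▸ sum_spectralDiag_le_sum_ithLargestOn hA S (hdiag j)

end EigenvalueSum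

section Laplacian

variable {V : Type*} {G : SimpleGraph V}

theorem lapMatrix_apply_self {R : Type*} [AddGroupWithOne R] [Fintype V] [DecidableEq V]
    [DecidableRel G.Adj] (v : V) : G.lapMatrix R v v = G.degree v := by
  simp [SimpleGraph.lapMatrix, SimpleGraph.degMatrix]

theorem pairwise_lapMatrix_eq_zero {R : Type*} [AddGroupWithOne R] [Fintype V] [DecidableEq V]
    [DecidableRel G.Adj] {W : Set V} (hW : G.IsIndepSet W) :
    W.Pairwise fun u v => G.lapMatrix R u v = 0 := fun u hu v hv huv => by
  simp [SimpleGraph.lapMatrix, SimpleGraph.degMatrix, huv, hW hu hv huv]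

theorem isIndepSet_left_of_isBipartiteWith {s t : Set V} (h : G.IsBipartiteWith s t) :
    G.IsIndepSet s := fun _ hu _ hv _ huv =>
  h.disjoint.notMem_of_mem_left hv (h.mem_of_mem_adj hu huv)

end Laplacian

theorem sum_lapEigs_le_of_bipartite_general {κ : Type*} [Fintype κ] {n : ℕ}
    (G : SimpleGraph (Fin n)) [DecidableRel G.Adj] (V : κ → Finset (Fin n))
    (hcover : ∀ v, ∃ j, v ∈ V j) (hindep : ∀ j, G.IsIndepSet (V j : Set (Fin n)))
    (k : ℕ) (hk : k ≤ n) :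
    ∑ i ∈ Icc 1 k, ithLargest (lapEigs G) i ≤
      ∑ j, ∑ i ∈ Icc 1 (min k #(V j)), ithLargestOn (V j) (degTuple G) i := by
  have hdeg : (fun w => RCLike.re (G.lapMatrix ℝ w w)) = degTuple G :=
    funext fun w => lapMatrix_apply_self w
  rw [← hdeg]
  exact sum_ithLargest_eigenvalues_le (SimpleGraph.posSemidef_lapMatrix ℝ G) hcover
    (fun j => pairwise_lapMatrix_eq_zero (hindep j)) hk

/-- let `G` be bipartite with parts `V₁, V₂`, and `1 ≤ k ≤ |V|`. Then
`∑_{i=1}^k λ_i(L(G)) ≤ ∑_{i=1}^{min{k,|V₁|}} d_i(G;V₁) + ∑_{i=1}^{min{k,|V₂|}} d_i(G;V₂)`,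
where `d_i(G;W)` is the `i`-th largest degree among the vertices of `W`. -/
theorem sum_lapEigs_le_of_bipartite {n : ℕ} (G : SimpleGraph (Fin n)) [DecidableRel G.Adj]
    (V₁ V₂ : Finset (Fin n)) (hdisj : Disjoint V₁ V₂) (hunion : V₁ ∪ V₂ = Finset.univ)
    (hbip : ∀ u v : Fin n, G.Adj u v → (u ∈ V₁ ∧ v ∈ V₂) ∨ (u ∈ V₂ ∧ v ∈ V₁))
    (k : ℕ) (hk1 : 1 ≤ k) (hk2 : k ≤ n) :
    ∑ i ∈ Finset.Icc 1 k, ithLargest (lapEigs G) i ≤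
      (∑ i ∈ Finset.Icc 1 (min k V₁.card), ithLargestOn V₁ (degTuple G) i) +
        ∑ i ∈ Finset.Icc 1 (min k V₂.card), ithLargestOn V₂ (degTuple G) i := by
  have hG : G.IsBipartiteWith V₁ V₂ := ⟨disjoint_coe.2 hdisj, hbip⟩
  simpa using sum_lapEigs_le_of_bipartite_general G ![V₁, V₂]
    (by simp [Fin.exists_fin_two, ← mem_union, hunion])
    (Fin.forall_fin_two.2 ⟨isIndepSet_left_of_isBipartiteWith hG,
      isIndepSet_left_of_isBipartiteWith hG.symm⟩) k hk2
end
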